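/- arXiv:0811.3889 — 2 statements merged into one kernel-verified Lean document; each statement's English description precedes it below -/
import Mathlib

section
/- Let U : ℝ^d → [-∞,∞) be a multivariate utility function with dual function U*(x*) := sup_{x∈ℝ^d} { U(x) − ⟨x, x*⟩ }. Then U is asymptotically satiable if and only if the closure of dom(U*) equals the polar cone (C_U)* := {x* ∈ ℝ^d : ⟨x, x*⟩ ≥ 0 for all x ∈ C_U} of the support cone C_U := cl(dom(U)). -/
/-!
The dual domain always lies in the polar of `C_U`: monotonicity of `U` along a direction
`c ∈ C_U` forces `0 ≤ ⟪c, y⟫` whenever `U*(y) < ∞` (`inner_nonneg_of_mem_domStar`). Moreover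
`dom U*` is stable under adding elements of the polar, so `cl (dom U*)` equals the polar exactly
when `0 ∈ cl (dom U*)`. It remains to compare this with asymptotic satiability.

A supergradient of `cl U` lies in `dom U*` provided `cl U` is finite at the base point. The value
`+∞` is excluded without a separation theorem (`clFn_ne_top`): monotonicity bounds `U` from below
on a translate of the orthant, so by concavity a blow-up near `x` would make `U` infinite at
a fixed midpoint.

Conversely, supergradients of `cl U` are dense in `dom U*`, by a proximal perturbation: for
`g₀ ∈ dom U*` and `η > 0` the function `cl U - ⟪·, g₀⟫ - η/2 ‖·‖²` attains its maximum at some `x`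
(`exists_proximal_max`), whence `g₀ + η x ∈ ∂(cl U)(x)` (`proximal_supergradient`), and `η x`
tends to `0` with `η`, because `η/2 ‖x‖²` stays bounded. Supergradients are automatically
nonnegative, since the polar of `C_U` is contained in the orthant.
-/

open Set Filter Topology
open scoped RealInnerProductSpace

noncomputable section

/-- Euclidean space `ℝ^d`. -/
abbrev Euc (d : ℕ) := EuclideanSpace ℝ (Fin d)

variable {d : ℕ}

/-- The hypograph of an `EReal`-valued function on `ℝ^d`. -/
def hypograph (U : Euc d → EReal) : Set (Euc d × ℝ) :=
  {p | (p.2 : EReal) ≤ U p.1}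

/-- `U : ℝ^d → [-∞,∞)` is proper concave if its hypograph is convex, it never takes the
value `+∞`, and its effective domain is nonempty. -/
def ProperConcave (U : Euc d → EReal) : Prop :=
  Convex ℝ (hypograph U) ∧ (∀ x, U x ≠ ⊤) ∧ (∃ x, U x ≠ ⊥)

/-- The effective domain `dom(U) = {x : U(x) > -∞}`. -/
def effDom (U : Euc d → EReal) : Set (Euc d) := {x | U x ≠ ⊥}

/-- A convex cone: `λC + μC ⊆ C` for all `λ, μ ≥ 0`. -/
def IsConvexCone (C : Set (Euc d)) : Prop :=
  ∀ a b : ℝ, 0 ≤ a → 0 ≤ b → ∀ x ∈ C, ∀ y ∈ C, a • x + b • y ∈ C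

/-- The nonnegative orthant `ℝ^d_+`. -/
def posOrthant (d : ℕ) : Set (Euc d) := {x | ∀ i, 0 ≤ x i}

/-- A multivariate utility function: a proper concave `U` whose support cone
`C_U := cl(dom U)` is a convex cone with `ℝ^d_+ ⊆ C_U ≠ ℝ^d`, and which is nondecreasing
with respect to the preorder induced by `C_U`. -/
def IsUtility (U : Euc d → EReal) : Prop :=
  ProperConcave U ∧ IsConvexCone (closure (effDom U)) ∧
    posOrthant d ⊆ closure (effDom U) ∧ closure (effDom U) ≠ univ ∧
    ∀ x x' : Euc d, x' - x ∈ closure (effDom U) → U x ≤ U x'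

/-- The dual function `U*(x*) = sup_x { U(x) - ⟨x, x*⟩ }`. -/
def dualFn (U : Euc d → EReal) (y : Euc d) : EReal :=
  ⨆ x : Euc d, U x - ((⟪x, y⟫ : ℝ) : EReal)

/-- The effective domain of the dual function, `dom(U*) = {x* : U*(x*) < ∞}`. -/
def effDomStar (U : Euc d → EReal) : Set (Euc d) := {y | dualFn U y ≠ ⊤}

/-- The superdifferential `∂U(x) = {x* : U(z) ≤ U(x) + ⟨z-x, x*⟩ ∀ z}`. -/
def superdiff (U : Euc d → EReal) (x : Euc d) : Set (Euc d) :=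
  {g | ∀ z : Euc d, U z ≤ U x + ((⟪z - x, g⟫ : ℝ) : EReal)}

/-- The closure `cl(U)` of `U`: the function whose hypograph is the closure of the
hypograph of `U`. -/
def clFn (U : Euc d → EReal) (x : Euc d) : EReal :=
  ⨆ r ∈ {r : ℝ | (x, r) ∈ closure (hypograph U)}, (r : EReal)

/-- `U` is asymptotically satiable: for every `ε > 0` there is `x` such that
`∂(cl U)(x) ∩ [0,ε)^d ≠ ∅`. -/
def AsympSatiable (U : Euc d → EReal) : Prop :=
  ∀ ε : ℝ, 0 < ε → ∃ x : Euc d, ∃ g ∈ superdiff (clFn U) x, ∀ i, 0 ≤ g i ∧ g i < ε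

/-! ### The dual domain and the polar cone -/

/-- `y ∈ dom U*` iff the affine function `M + ⟪·, y⟫` majorizes `U` for some real `M`,
phrased through points of the hypograph to stay within real arithmetic. -/
lemma mem_domStar_iff {U : Euc d → EReal} (hT : ∀ x, U x ≠ ⊤) (y : Euc d) :
    y ∈ effDomStar U ↔ ∃ M : ℝ, ∀ p ∈ hypograph U, p.2 - ⟪p.1, y⟫ ≤ M := by
  constructor
  · intro h
    refine ⟨(dualFn U y).toReal, fun p hp => ?_⟩
    have h1 : U p.1 - ((⟪p.1, y⟫ : ℝ) : EReal) ≤ dualFn U y :=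
      le_iSup (fun x : Euc d => U x - ((⟪x, y⟫ : ℝ) : EReal)) p.1
    have h2 : ((p.2 - ⟪p.1, y⟫ : ℝ) : EReal) ≤ U p.1 - ((⟪p.1, y⟫ : ℝ) : EReal) := by
      rw [EReal.coe_sub]
      exact EReal.sub_le_sub hp le_rfl
    exact EReal.coe_le_coe_iff.1 (h2.trans (h1.trans (EReal.le_coe_toReal h)))
  · rintro ⟨M, hM⟩
    have h : dualFn U y ≤ (M : EReal) := by
      refine iSup_le fun x => ?_
      by_cases hb : U x = ⊥
      · simp [hb]
      · have hx : ((U x).toReal : EReal) = U x := EReal.coe_toReal (hT x) hb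
        have := hM (x, (U x).toReal) hx.le
        rw [← hx, ← EReal.coe_sub]
        exact EReal.coe_le_coe_iff.2 this
    exact ne_of_lt (h.trans_lt (EReal.coe_lt_top M))

lemma exists_mem_hypograph {U : Euc d → EReal} (hU : IsUtility U) :
    ∃ p, p ∈ hypograph U := by
  obtain ⟨x, hx⟩ := hU.1.2.2
  exact ⟨(x, (U x).toReal), (EReal.coe_toReal (hU.1.2.1 x) hx).le⟩

/-- Moving a point `x₀` of the domain along `n c` with `c ∈ C_U` does not decrease `U`,
so a real bound on `U - ⟪·, y⟫` forbids `⟪c, y⟫ < 0`. -/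
lemma inner_nonneg_of_mem_domStar {U : Euc d → EReal} (hU : IsUtility U) {y : Euc d}
    (hy : y ∈ effDomStar U) {c : Euc d} (hc : c ∈ closure (effDom U)) :
    0 ≤ (⟪c, y⟫ : ℝ) := by
  obtain ⟨M, hM⟩ := (mem_domStar_iff hU.1.2.1 y).1 hy
  obtain ⟨⟨x, r⟩, hp⟩ := exists_mem_hypograph hU
  by_contra! hneg
  obtain ⟨n, hn⟩ := exists_nat_gt ((M - (r - ⟪x, y⟫)) / (-⟪c, y⟫))
  rw [div_lt_iff₀ (by linarith)] at hn
  have hnc : (n : ℝ) • c ∈ closure (effDom U) := by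
    simpa using hU.2.1 n 0 n.cast_nonneg le_rfl c hc c hc
  have hmono : U x ≤ U (x + (n : ℝ) • c) := hU.2.2.2.2 _ _ (by simpa using hnc)
  have := hM (x + (n : ℝ) • c, r) (le_trans hp hmono)
  simp only [inner_add_left, real_inner_smul_left] at this
  linarith

lemma closure_domStar_subset {U : Euc d → EReal} (hU : IsUtility U) :
    closure (effDomStar U) ⊆
      {y : Euc d | ∀ x ∈ closure (effDom U), 0 ≤ (⟪x, y⟫ : ℝ)} := by
  refine closure_minimal (fun y hy x hx => inner_nonneg_of_mem_domStar hU hy hx) ?_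
  simp only [ofPred_forall]
  exact isClosed_biInter fun x _ =>
    isClosed_le continuous_const (continuous_const.inner continuous_id)

lemma add_mem_domStar {U : Euc d → EReal} (hU : IsUtility U) {y g : Euc d}
    (hy : ∀ x ∈ closure (effDom U), 0 ≤ (⟪x, y⟫ : ℝ)) (hg : g ∈ effDomStar U) :
    y + g ∈ effDomStar U := by
  rw [mem_domStar_iff hU.1.2.1] at hg ⊢
  obtain ⟨M, hM⟩ := hg
  refine ⟨M, fun p hp => ?_⟩
  have hdom : p.1 ∈ effDom U := fun hb => by
    have h : (p.2 : EReal) ≤ U p.1 := hp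
    rw [hb] at h
    exact EReal.coe_ne_bot _ (le_bot_iff.1 h)
  have := hM p hp
  have := hy _ (subset_closure hdom)
  rw [inner_add_right]
  linarith

/-! ### Finiteness of the closure of `U` -/

lemma le_clFn (U : Euc d → EReal) {x : Euc d} {r : ℝ} (h : (x, r) ∈ closure (hypograph U)) :
    (r : EReal) ≤ clFn U x :=
  le_iSup₂ (f := fun (r : ℝ) (_ : r ∈ {r : ℝ | (x, r) ∈ closure (hypograph U)}) => (r : EReal))
    r h

lemma clFn_ne_top {U : Euc d → EReal} (hU : IsUtility U) (x : Euc d) : clFn U x ≠ ⊤ := by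
  obtain ⟨⟨x₀, c⟩, hp⟩ := exists_mem_hypograph hU
  -- If `(y, s)` is in the hypograph with `y ≤ x + 1` coordinatewise, then its reflection
  -- `x + 1 + x₀ - y` through `m` dominates `x₀`, so `U m` is at least `(s + c) / 2`.
  set one : Euc d := WithLp.toLp 2 (fun _ => (1 : ℝ)) with hone
  set m : Euc d := (1 / 2 : ℝ) • (x + one + x₀) with hm
  have key : ∀ r : ℝ, (x, r) ∈ closure (hypograph U) → r ≤ 2 * (U m).toReal - c + 1 := by
    intro r hr
    obtain ⟨⟨y, s⟩, hys, hd⟩ := Metric.mem_closure_iff.1 hr 1 one_pos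
    rw [Prod.dist_eq, max_lt_iff] at hd
    obtain ⟨hd1, hd2⟩ := hd
    have hs : r - 1 < s := by
      rw [Real.dist_eq] at hd2
      linarith [(abs_lt.1 hd2).2]
    have hw : ((x + one + x₀ - y, c) : Euc d × ℝ) ∈ hypograph U := by
      refine le_trans hp (hU.2.2.2.2 _ _ (hU.2.2.1 fun i => ?_))
      have h1 : |(x - y) i| ≤ ‖x - y‖ := by
        simpa using PiLp.norm_apply_le (x - y) i
      rw [← dist_eq_norm] at h1
      have h2 := (abs_le.1 h1).1
      simp only [PiLp.sub_apply, PiLp.add_apply, hone] at h2 ⊢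
      simp only at hd1
      linarith
    have hmid := hU.1.1 hys hw (by norm_num : (0 : ℝ) ≤ 1 / 2) (by norm_num : (0 : ℝ) ≤ 1 / 2)
      (by norm_num)
    have hEq : (1 / 2 : ℝ) • ((y, s) : Euc d × ℝ) + (1 / 2 : ℝ) • (x + one + x₀ - y, c)
        = (m, (s + c) / 2) := by
      ext1
      · simp only [Prod.fst_add, Prod.smul_fst, hm]
        module
      · simp only [Prod.snd_add, Prod.smul_snd, smul_eq_mul]
        ring
    rw [hEq] at hmid
    have h3 : (((s + c) / 2 : ℝ) : EReal) ≤ U m := hmid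
    have := EReal.coe_le_coe_iff.1 (h3.trans (EReal.le_coe_toReal (hU.1.2.1 m)))
    linarith
  have : clFn U x ≤ ((2 * (U m).toReal - c + 1 : ℝ) : EReal) :=
    iSup₂_le fun r hr => EReal.coe_le_coe_iff.2 (key r hr)
  exact ne_of_lt (this.trans_lt (EReal.coe_lt_top _))

lemma mem_domStar_of_mem_superdiff {U : Euc d → EReal} (hU : IsUtility U) {x g : Euc d}
    (hg : g ∈ superdiff (clFn U) x) : g ∈ effDomStar U := by
  rw [mem_domStar_iff hU.1.2.1]
  refine ⟨(clFn U x).toReal - ⟪x, g⟫, fun p hp => ?_⟩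
  have h1 := (le_clFn U (subset_closure hp)).trans (hg p.1)
  have h2 : clFn U x + ((⟪p.1 - x, g⟫ : ℝ) : EReal) ≤
      (((clFn U x).toReal + ⟪p.1 - x, g⟫ : ℝ) : EReal) := by
    rw [EReal.coe_add]
    gcongr
    exact EReal.le_coe_toReal (clFn_ne_top hU x)
  have h3 := EReal.coe_le_coe_iff.1 (h1.trans h2)
  rw [inner_sub_left] at h3
  linarith

/-! ### Density of supergradients in the dual domain -/

/-- The quadratic term makes the superlevel sets of the perturbed functional on a closed set
compact, as soon as the unperturbed functional is bounded above there. -/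
lemma exists_proximal_max {H : Set (Euc d × ℝ)} (hH : IsClosed H) {p₀ : Euc d × ℝ} (hp₀ : p₀ ∈ H)
    {g₀ : Euc d} {M : ℝ} (hM : ∀ p ∈ H, p.2 - ⟪p.1, g₀⟫ ≤ M) {η : ℝ} (hη : 0 < η) :
    ∃ p ∈ H, ∀ q ∈ H, q.2 - ⟪q.1, g₀⟫ - η / 2 * ‖q.1‖ ^ 2 ≤
      p.2 - ⟪p.1, g₀⟫ - η / 2 * ‖p.1‖ ^ 2 := by
  set f : Euc d × ℝ → ℝ := fun p => p.2 - ⟪p.1, g₀⟫ - η / 2 * ‖p.1‖ ^ 2 with hf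
  have hfc : Continuous f := by
    have : Continuous fun p : Euc d × ℝ => (⟪p.1, g₀⟫ : ℝ) :=
      continuous_fst.inner continuous_const
    fun_prop
  set R : ℝ := (M - f p₀) / (η / 2) + 1 with hR
  have hsub : H ∩ {p | f p₀ ≤ f p} ⊆
      Metric.closedBall (0 : Euc d) R ×ˢ Icc (f p₀ - R * ‖g₀‖) (M + R * ‖g₀‖) := by
    rintro p ⟨hpH, hp⟩
    have hp' : f p₀ ≤ p.2 - ⟪p.1, g₀⟫ - η / 2 * ‖p.1‖ ^ 2 := hp
    have hMp := hM p hpH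
    have hx2 : ‖p.1‖ ^ 2 ≤ R - 1 := by
      rw [hR, add_sub_cancel_right, le_div_iff₀ (by positivity)]
      linarith
    have hx : ‖p.1‖ ≤ R := by nlinarith [sq_nonneg (‖p.1‖ - 1)]
    have hin := abs_le.1 (abs_real_inner_le_norm p.1 g₀)
    have hmul : ‖p.1‖ * ‖g₀‖ ≤ R * ‖g₀‖ := by gcongr
    have hpos : 0 ≤ η / 2 * ‖p.1‖ ^ 2 := by positivity
    refine ⟨by simpa using hx, ?_, ?_⟩ <;> linarith [hin.1, hin.2]
  have hK : IsCompact (H ∩ {p | f p₀ ≤ f p}) :=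
    ((isCompact_closedBall _ _).prod isCompact_Icc).of_isClosed_subset
      (hH.inter (isClosed_le continuous_const hfc)) hsub
  obtain ⟨p, hp, hmax⟩ := hK.exists_isMaxOn ⟨p₀, hp₀, le_refl (f p₀)⟩ hfc.continuousOn
  refine ⟨p, hp.1, fun q hq => ?_⟩
  by_cases h : f p₀ ≤ f q
  · exact hmax ⟨hq, h⟩
  · exact (not_le.1 h).le.trans hp.2

/-- First-order optimality along the segment from the maximizer `p` to `q`. -/
lemma proximal_supergradient {H : Set (Euc d × ℝ)} (hH : Convex ℝ H) {p : Euc d × ℝ} (hp : p ∈ H)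
    {g₀ : Euc d} {η : ℝ} (hη : 0 < η)
    (hmax : ∀ q ∈ H, q.2 - ⟪q.1, g₀⟫ - η / 2 * ‖q.1‖ ^ 2 ≤
      p.2 - ⟪p.1, g₀⟫ - η / 2 * ‖p.1‖ ^ 2) {q : Euc d × ℝ} (hq : q ∈ H) :
    q.2 ≤ p.2 + ⟪q.1 - p.1, g₀ + η • p.1⟫ := by
  set A : ℝ := q.2 - p.2 - ⟪q.1 - p.1, g₀ + η • p.1⟫ with hA
  set B : ℝ := η / 2 * ‖q.1 - p.1‖ ^ 2 with hB
  have hB0 : 0 ≤ B := by positivity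
  have key : ∀ t : ℝ, 0 < t → t ≤ 1 → A ≤ t * B := by
    intro t ht ht1
    have h := hmax _ (hH.add_smul_sub_mem hp hq ⟨ht.le, ht1⟩)
    simp only [Prod.fst_add, Prod.snd_add, Prod.smul_fst, Prod.smul_snd, Prod.fst_sub,
      Prod.snd_sub, smul_eq_mul, norm_add_sq_real, norm_smul, inner_add_left,
      real_inner_smul_left, real_inner_smul_right, Real.norm_eq_abs, mul_pow, sq_abs] at h
    refine le_of_mul_le_mul_left ?_ ht
    simp only [hA, hB, inner_add_right, real_inner_smul_right]
    rw [real_inner_comm p.1 (q.1 - p.1)]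
    linarith
  have hA0 : A ≤ 0 := by
    by_contra! hpos
    have h1 : 0 < A + B + 1 := by linarith
    have h := key (A / (A + B + 1)) (by positivity) (by rw [div_le_one h1]; linarith)
    rw [div_mul_eq_mul_div, le_div_iff₀ h1] at h
    nlinarith
  linarith

/-- Supergradients of `cl U` are dense in `dom U*`. -/
lemma exists_superdiff_near {U : Euc d → EReal} (hU : IsUtility U) {g₀ : Euc d}
    (hg₀ : g₀ ∈ effDomStar U) {δ : ℝ} (hδ : 0 < δ) :
    ∃ x : Euc d, ∃ g ∈ superdiff (clFn U) x, ‖g - g₀‖ < δ := by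
  obtain ⟨M, hM⟩ := (mem_domStar_iff hU.1.2.1 g₀).1 hg₀
  obtain ⟨p₀, hp₀⟩ := exists_mem_hypograph hU
  have hM' : ∀ p ∈ closure (hypograph U), p.2 - ⟪p.1, g₀⟫ ≤ M := by
    have hc : IsClosed {p : Euc d × ℝ | p.2 - ⟪p.1, g₀⟫ ≤ M} :=
      isClosed_le (continuous_snd.sub (continuous_fst.inner continuous_const)) continuous_const
    exact fun p hp => closure_minimal hM hc hp
  -- Comparing the maximizer with `p₀` gives `η / 2 * ‖x‖ ^ 2 ≤ L + η / 2 * ‖p₀.1‖ ^ 2`, i.e.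
  -- `‖η x‖ ^ 2 ≤ 2 η L + η ^ 2 ‖p₀.1‖ ^ 2 ≤ η C` for `η ≤ 1`; then `η C < δ ^ 2` suffices.
  set L : ℝ := M - (p₀.2 - ⟪p₀.1, g₀⟫) with hL
  have hL0 : 0 ≤ L := by linarith [hM p₀ hp₀]
  set C : ℝ := 2 * L + ‖p₀.1‖ ^ 2 with hC
  have hC0 : 0 ≤ C := by positivity
  obtain ⟨η, hη, hη1, hηC⟩ : ∃ η : ℝ, 0 < η ∧ η ≤ 1 ∧ η * C < δ ^ 2 := by
    refine ⟨min 1 (δ ^ 2 / (C + 1)), by positivity, min_le_left _ _, ?_⟩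
    calc min 1 (δ ^ 2 / (C + 1)) * C ≤ δ ^ 2 / (C + 1) * C := by gcongr; exact min_le_right _ _
      _ < δ ^ 2 := by
        rw [div_mul_eq_mul_div, div_lt_iff₀ (by positivity)]
        nlinarith [sq_pos_of_pos hδ]
  obtain ⟨⟨x, r⟩, hp, hmax⟩ := exists_proximal_max isClosed_closure (subset_closure hp₀) hM' hη
  refine ⟨x, g₀ + η • x, fun z => ?_, ?_⟩
  · refine iSup₂_le fun s hs => ?_
    have h := proximal_supergradient hU.1.1.closure hp hη hmax hs
    refine (EReal.coe_le_coe_iff.2 h).trans ?_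
    rw [EReal.coe_add]
    gcongr
    exact le_clFn U hp
  · have h1 := hmax p₀ (subset_closure hp₀)
    have h2 := hM' _ hp
    simp only at h1 h2
    rw [add_sub_cancel_left, norm_smul, Real.norm_eq_abs, abs_of_pos hη]
    refine lt_of_pow_lt_pow_left₀ 2 hδ.le (lt_of_le_of_lt ?_ hηC)
    have h3 : η * ‖x‖ ^ 2 ≤ 2 * L + η * ‖p₀.1‖ ^ 2 := by linarith
    have h4 : η * ‖p₀.1‖ ^ 2 ≤ ‖p₀.1‖ ^ 2 := mul_le_of_le_one_left (by positivity) hη1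
    calc (η * ‖x‖) ^ 2 = η * (η * ‖x‖ ^ 2) := by ring
      _ ≤ η * C := by gcongr; linarith

/-! ### Satiability and the polar cone -/

/-- `e_i` lies in the orthant, hence in `C_U`, so the polar of `C_U` is in the orthant. -/
lemma nonneg_of_mem_domStar {U : Euc d → EReal} (hU : IsUtility U) {g : Euc d}
    (hg : g ∈ effDomStar U) (i : Fin d) : 0 ≤ g i := by
  have he : EuclideanSpace.single i (1 : ℝ) ∈ posOrthant d := fun j => by
    by_cases h : j = i <;> simp [h]
  simpa [EuclideanSpace.inner_single_left] using
    inner_nonneg_of_mem_domStar hU hg (hU.2.2.1 he)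

/-- A utility function `U` is asymptotically satiable if and only if `cl(dom U*)` equals
the polar cone `(C_U)* = {x* : ⟨x, x*⟩ ≥ 0 ∀ x ∈ C_U}` of the support cone
`C_U = cl(dom U)`. -/
theorem asympSatiable_iff_closure_domStar_eq_polar
    (U : Euc d → EReal) (hU : IsUtility U) :
    AsympSatiable U ↔
      closure (effDomStar U) = {y : Euc d | ∀ x ∈ closure (effDom U), 0 ≤ (⟪x, y⟫ : ℝ)} := by
  constructor
  · intro hS
    refine (closure_domStar_subset hU).antisymm fun y hy => ?_
    -- Approximate `y` by `y + g` with `g ∈ dom U*` small; the square root of `d` converts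
    -- coordinatewise smallness into smallness in the Euclidean norm.
    rw [Metric.mem_closure_iff]
    intro δ hδ
    obtain ⟨x, g, hg, hgs⟩ := hS (δ / (√d + 1)) (by positivity)
    refine ⟨y + g, add_mem_domStar hU hy (mem_domStar_of_mem_superdiff hU hg), ?_⟩
    rw [dist_self_add_right, EuclideanSpace.norm_eq]
    have hsum : ∑ i, ‖g i‖ ^ 2 ≤ d * (δ / (√d + 1)) ^ 2 := by
      calc ∑ i, ‖g i‖ ^ 2 ≤ ∑ _i : Fin d, (δ / (√d + 1)) ^ 2 := by
            refine Finset.sum_le_sum fun i _ => ?_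
            rw [Real.norm_eq_abs, sq_abs]
            exact pow_le_pow_left₀ (hgs i).1 (hgs i).2.le 2
        _ = d * (δ / (√d + 1)) ^ 2 := by simp
    calc √(∑ i, ‖g i‖ ^ 2) ≤ √(d * (δ / (√d + 1)) ^ 2) := Real.sqrt_le_sqrt hsum
      _ = √d * (δ / (√d + 1)) := by
        rw [Real.sqrt_mul (by positivity), Real.sqrt_sq (by positivity)]
      _ < δ := by
        rw [mul_div_assoc', div_lt_iff₀ (by positivity)]
        linarith
  · intro hcl ε hε
    have h0 : (0 : Euc d) ∈ closure (effDomStar U) := by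
      rw [hcl]
      intro x _
      simp
    obtain ⟨g₀, hg₀, hd⟩ := Metric.mem_closure_iff.1 h0 (ε / 2) (by positivity)
    rw [dist_zero_left] at hd
    obtain ⟨x, g, hg, hgg⟩ := exists_superdiff_near hU hg₀ (half_pos hε)
    refine ⟨x, g, hg, fun i =>
      ⟨nonneg_of_mem_domStar hU (mem_domStar_of_mem_superdiff hU hg) i, ?_⟩⟩
    have h1 : |g i| ≤ ‖g‖ := by simpa using PiLp.norm_apply_le g i
    have h2 : ‖g‖ ≤ ‖g - g₀‖ + ‖g₀‖ := norm_le_norm_sub_add g g₀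
    linarith [le_abs_self (g i)]
end
end

section
/- Let U : ℝ^d → [-∞,∞) be a utility function supported on ℝ^d_+ which is upper semi-continuous, strictly concave on int(ℝ^d_+), essentially smooth, and asymptotically satiable, and let U* be its dual function. Then for every point a on the boundary of ℝ^d_+ with U*(a) < ∞ and every b ∈ int(ℝ^d_+), the one-sided directional derivative of U* at a in direction b is −∞, i.e. lim_{λ↓0} (U*(a + λ b) − U*(a))/λ = −∞. -/
/-! The argument shows that a finite slope produces a supergradient where none can exist.
If the difference quotients of `U*` at `a` along `b` do not tend to `-∞`, then near-maximizers of
`U - ⟨·, a + l b⟩` stay bounded as `l ↓ 0` along a sequence, so by upper semicontinuity they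
accumulate at a maximizer `x₀` of `U - ⟨·, a⟩`, that is, `a ∈ ∂U(x₀)`
(`exists_superdiff_of_not_tendsto`). Essential smoothness and monotonicity force `x₀` into
the interior of the domain (`mem_interior_of_superdiff`). As `a` lies on the boundary of the
orthant, some coordinate `a i` vanishes; then `U` is constant on the ray `x₀ + s eᵢ`,
`s ≥ 0`, contradicting strict concavity. Convexity of `U*` plays no role, and its only finiteness
property involved is `U*(a) < ∞`. -/

open Set Filter Topology
open scoped RealInnerProductSpace

noncomputable section

variable {d : ℕ}

/-- A utility function supported on `ℝ^d_+`: proper concave, `cl(dom U) = ℝ^d_+`, and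
nondecreasing with respect to the preorder induced by `ℝ^d_+`. -/
def SupportedOnOrthant (U : Euc d → EReal) : Prop :=
  ProperConcave U ∧ closure (effDom U) = posOrthant d ∧
    ∀ x x' : Euc d, x' - x ∈ posOrthant d → U x ≤ U x'

/-- `U` is multivariate risk averse:
`U(x) + U(x+z+z') ≤ U(x+z) + U(x+z')` for all `x` and all `z, z' ≥ 0`. -/
def MultivariateRiskAverse (U : Euc d → EReal) : Prop :=
  ∀ x : Euc d, ∀ z ∈ posOrthant d, ∀ z' ∈ posOrthant d,
    U x + U (x + z + z') ≤ U (x + z) + U (x + z')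

/-- `U` has decreasing marginals:
`U(x+z) - U(x) ≥ U(x'+z) - U(x')` whenever `x ∈ dom(U)`, `x' ≽ x` and `z ≥ 0`. -/
def DecreasingMarginals (U : Euc d → EReal) : Prop :=
  ∀ x ∈ effDom U, ∀ x' : Euc d, x' - x ∈ posOrthant d →
    ∀ z ∈ posOrthant d, U (x' + z) - U x' ≤ U (x + z) - U x

/-- `U` is strictly concave on the interior of `ℝ^d_+`. -/
def StrictConcaveOnIntOrthant (U : Euc d → EReal) : Prop :=
  ∀ x ∈ interior (posOrthant d), ∀ y ∈ interior (posOrthant d), x ≠ y →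
    ∀ a b : ℝ, 0 < a → 0 < b → a + b = 1 →
      (a : EReal) * U x + (b : EReal) * U y < U (a • x + b • y)

/-- `U` is essentially smooth, with gradient map `g` on `int(dom U)`: `int(dom U)` is
nonempty, `U` is differentiable on `int(dom U)` with gradient `g`, and `|∇U(xₙ)| → ∞`
along every sequence in `int(dom U)` converging to a boundary point of `int(dom U)`. -/
def EssSmoothWith (U : Euc d → EReal) (g : Euc d → Euc d) : Prop :=
  (interior (effDom U)).Nonempty ∧
    (∀ x ∈ interior (effDom U), HasGradientAt (fun y => (U y).toReal) (g x) x) ∧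
    ∀ (x : ℕ → Euc d) (b : Euc d), (∀ n, x n ∈ interior (effDom U)) →
      b ∈ frontier (interior (effDom U)) → Tendsto x atTop (𝓝 b) →
      Tendsto (fun n => ‖g (x n)‖) atTop atTop

/-! ### The orthant and directional derivatives -/

theorem mem_interior_posOrthant {x : Euc d} :
    x ∈ interior (posOrthant d) ↔ ∀ i, 0 < x i := by
  constructor
  · intro hx i
    have hc : ContinuousAt (fun s : ℝ => x - s • EuclideanSpace.single i (1 : ℝ)) 0 := by
      fun_prop
    have h1 : ∀ᶠ s in 𝓝 (0 : ℝ),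
        x - s • EuclideanSpace.single i (1 : ℝ) ∈ posOrthant d := by
      apply hc.eventually_mem
      simpa using mem_interior_iff_mem_nhds.1 hx
    have h2 : ∀ᶠ s in 𝓝[>] (0 : ℝ),
        x - s • EuclideanSpace.single i (1 : ℝ) ∈ posOrthant d := h1.filter_mono nhdsWithin_le_nhds
    obtain ⟨s, hs, hs0⟩ := (h2.and self_mem_nhdsWithin).exists
    have h3 := hs i
    have hs0' : (0 : ℝ) < s := hs0
    simp at h3
    linarith
  · intro hx
    have ho : IsOpen {y : Euc d | ∀ i, 0 < y i} := by
      simp only [ofPred_forall]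
      exact isOpen_iInter_of_finite fun i => isOpen_lt continuous_const (by fun_prop)
    exact mem_interior.2 ⟨_, fun y hy i => (hy i).le, ho, hx⟩

theorem isClosed_posOrthant : IsClosed (posOrthant d) := by
  have : posOrthant d = ⋂ i, {x : Euc d | 0 ≤ x i} := by ext; simp [posOrthant]
  rw [this]
  exact isClosed_iInter fun i => isClosed_le continuous_const (by fun_prop)

theorem inner_eq_sum (x y : Euc d) : ⟪x, y⟫ = ∑ i, x i * y i := by
  simp [PiLp.inner_apply, mul_comm]

theorem inner_nonneg_of_mem {x y : Euc d} (hx : x ∈ posOrthant d) (hy : y ∈ posOrthant d) :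
    0 ≤ ⟪x, y⟫ := by
  rw [inner_eq_sum]
  exact Finset.sum_nonneg fun i _ => mul_nonneg (hx i) (hy i)

theorem norm_le_sum_of_mem {x : Euc d} (hx : x ∈ posOrthant d) : ‖x‖ ≤ ∑ i, x i := by
  have h0 : 0 ≤ ∑ i, x i := Finset.sum_nonneg fun i _ => hx i
  refine abs_le_of_sq_le_sq' ?_ h0 |>.2
  rw [EuclideanSpace.real_norm_sq_eq]
  exact Finset.sum_sq_le_sq_sum_of_nonneg fun i _ => hx i

/-- An upper bound `c` on the forward difference quotients in direction `v` bounds the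
directional derivative. -/
theorem inner_gradient_le {f : Euc d → ℝ} {x v p : Euc d} {c : ℝ} (hf : HasGradientAt f p x)
    (h : ∀ᶠ s in 𝓝[>] (0 : ℝ), f (x + s • v) ≤ f x + s * c) : ⟪p, v⟫ ≤ c := by
  have h1 := (hf.hasFDerivAt.hasLineDerivAt v).tendsto_slope_zero_right
  refine le_of_tendsto h1 ?_
  filter_upwards [h, self_mem_nhdsWithin] with s hs hs0
  have hs0' : (0 : ℝ) < s := hs0
  rw [smul_eq_mul, inv_mul_le_iff₀ hs0']
  linarith

/-- The vector all of whose coordinates are `1`. -/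
def onesVec (d : ℕ) : Euc d := WithLp.toLp 2 fun _ => 1

/-! ### The effective domain -/

theorem SupportedOnOrthant.mem_of_ne_bot {U : Euc d → EReal} (hU : SupportedOnOrthant U)
    {x : Euc d} (hx : U x ≠ ⊥) : x ∈ posOrthant d :=
  hU.2.1 ▸ subset_closure hx

theorem SupportedOnOrthant.coe_toReal {U : Euc d → EReal} (hU : SupportedOnOrthant U)
    {x : Euc d} (hx : U x ≠ ⊥) : ((U x).toReal : EReal) = U x :=
  EReal.coe_toReal (hU.1.2.1 x) hx

/-- A point dominating a point of `dom U` strictly in every coordinate is interior to `dom U`,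
by monotonicity. -/
theorem SupportedOnOrthant.mem_interior_effDom {U : Euc d → EReal} (hU : SupportedOnOrthant U)
    {x y : Euc d} (hx : U x ≠ ⊥) (h : ∀ i, x i < y i) : y ∈ interior (effDom U) := by
  have ho : IsOpen ((fun z : Euc d => z - x) ⁻¹' interior (posOrthant d)) :=
    isOpen_interior.preimage (by fun_prop)
  refine mem_interior.2 ⟨_, fun z hz => ?_, ho, ?_⟩
  · have := hU.2.2 x z (interior_subset hz)
    exact fun hb => hx (le_bot_iff.1 (hb ▸ this))
  · exact mem_interior_posOrthant.2 fun i => by simpa using h i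

/-! ### Supergradients from finite slopes -/

/-- If the difference quotients of `U*` at `a` in an interior direction `b` do not
tend to `-∞`, then `U - ⟨·, a⟩` attains its supremum at some `x₀ ∈ dom U`, so that
`a ∈ ∂U(x₀)`. Near-maximizers for `a + l b` stay bounded, because the slope bound controls
`⟨x, b⟩`, and upper semicontinuity makes any limit point a maximizer for `a`. -/
theorem exists_superdiff_of_not_tendsto
    {U : Euc d → EReal} (hU : SupportedOnOrthant U) (husc : UpperSemicontinuous U)
    {a b : Euc d} (ha : dualFn U a ≠ ⊤) (hb : ∀ i, 0 < b i)
    (hnt : ¬ Tendsto (fun l : ℝ => (dualFn U (a + l • b) - dualFn U a) * ((l⁻¹ : ℝ) : EReal))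
          (𝓝[>] (0 : ℝ)) (𝓝 (⊥ : EReal))) :
    ∃ x₀ : Euc d, U x₀ ≠ ⊥ ∧
      ∀ z, U z ≠ ⊥ → (U z).toReal ≤ (U x₀).toReal + ⟪z - x₀, a⟫ := by
  obtain ⟨w, hw⟩ := hU.1.2.2
  have hbot : ∀ y, dualFn U y ≠ ⊥ := by
    intro y hy
    have h1 : U w - ((⟪w, y⟫ : ℝ) : EReal) ≤ dualFn U y := le_iSup (fun x => U x - ((⟪x, y⟫ : ℝ) : EReal)) w
    rw [hy, ← hU.coe_toReal hw, ← EReal.coe_sub] at h1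
    exact EReal.coe_ne_bot _ (le_bot_iff.1 h1)
  obtain ⟨A, hA⟩ : ∃ A : ℝ, dualFn U a = A := ⟨_, (EReal.coe_toReal ha (hbot a)).symm⟩
  -- Fenchel's inequality at `a`.
  have hfen : ∀ z, U z ≠ ⊥ → (U z).toReal - ⟪z, a⟫ ≤ A := by
    intro z hz
    have h1 : U z - ((⟪z, a⟫ : ℝ) : EReal) ≤ dualFn U a := le_iSup (fun x => U x - ((⟪x, a⟫ : ℝ) : EReal)) z
    rw [hA, ← hU.coe_toReal hz, ← EReal.coe_sub] at h1
    exact_mod_cast h1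
  rw [EReal.tendsto_nhds_bot_iff_real] at hnt
  push Not at hnt
  obtain ⟨K, hK⟩ := hnt
  have hKpos := hK.and_eventually (self_mem_nhdsWithin : Ioi (0 : ℝ) ∈ 𝓝[>] (0 : ℝ))
  obtain ⟨l, hl, hlp⟩ := exists_seq_forall_of_frequently hKpos
  -- Maximizers for `a + lₙ b` up to an error `lₙ`.
  have hx : ∀ n, ∃ x, U x ≠ ⊥ ∧
      A + K * l n - l n < (U x).toReal - ⟪x, a⟫ - l n * ⟪x, b⟫ := by
    intro n
    obtain ⟨hq, hpos⟩ := hlp n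
    have hpos : 0 < l n := hpos
    have hlt : ((A + K * l n - l n : ℝ) : EReal) < dualFn U (a + l n • b) := by
      rcases eq_or_ne (dualFn U (a + l n • b)) ⊤ with ht | ht
      · rw [ht]; exact EReal.coe_lt_top _
      obtain ⟨F, hF⟩ : ∃ F : ℝ, dualFn U (a + l n • b) = F :=
        ⟨_, (EReal.coe_toReal ht (hbot _)).symm⟩
      rw [hF, hA, ← EReal.coe_sub, ← EReal.coe_mul, EReal.coe_le_coe_iff,
        ← div_eq_mul_inv, le_div_iff₀ hpos] at hq
      rw [hF, EReal.coe_lt_coe_iff]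
      linarith
    obtain ⟨x, hx⟩ := lt_iSup_iff.1 hlt
    have hxb : U x ≠ ⊥ := by
      intro h
      rw [h, EReal.bot_sub] at hx
      exact not_lt_bot hx
    refine ⟨x, hxb, ?_⟩
    rw [← hU.coe_toReal hxb, ← EReal.coe_sub, EReal.coe_lt_coe_iff, inner_add_right,
      inner_smul_right] at hx
    linarith
  choose x hxb hx using hx
  have hmem : ∀ n, x n ∈ posOrthant d := fun n => hU.mem_of_ne_bot (hxb n)
  have hinner : ∀ n, ⟪x n, b⟫ ≤ 1 - K := by
    intro n
    have h1 := hfen _ (hxb n)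
    have h2 := hx n
    have hpos : 0 < l n := (hlp n).2
    by_contra! h3
    nlinarith [mul_lt_mul_of_pos_left h3 hpos]
  have hbdd : ∀ n, x n ∈ Metric.closedBall (0 : Euc d) (∑ i, (1 - K) / b i) := by
    intro n
    rw [mem_closedBall_zero_iff]
    refine (norm_le_sum_of_mem (hmem n)).trans (Finset.sum_le_sum fun i _ => ?_)
    rw [le_div_iff₀ (hb i)]
    refine le_trans ?_ (hinner n)
    rw [inner_eq_sum]
    exact Finset.single_le_sum (f := fun j => x n j * b j)
      (fun j _ => mul_nonneg (hmem n j) (hb j).le) (Finset.mem_univ i)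
  obtain ⟨x₀, -, φ, hφ, hlim⟩ := tendsto_subseq_of_bounded Metric.isBounded_closedBall hbdd
  have hl0 : Tendsto (l ∘ φ) atTop (𝓝 0) :=
    (hl.mono_right nhdsWithin_le_nhds).comp hφ.tendsto_atTop
  have key : ((A + ⟪x₀, a⟫ : ℝ) : EReal) ≤ U x₀ := by
    by_contra! hcon
    obtain ⟨r, hr1, hr2⟩ := EReal.lt_iff_exists_real_btwn.1 hcon
    have hr2 : r < A + ⟪x₀, a⟫ := by exact_mod_cast hr2
    have e1 : ∀ᶠ n in atTop, U (x (φ n)) < r := hlim.eventually (husc x₀ r hr1)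
    have t2 : Tendsto (fun n => A + K * (l ∘ φ) n - (l ∘ φ) n + ⟪(x ∘ φ) n, a⟫) atTop
        (𝓝 (A + K * 0 - 0 + ⟪x₀, a⟫)) :=
      ((tendsto_const_nhds.add (hl0.const_mul K)).sub hl0).add (hlim.inner tendsto_const_nhds)
    have e2 := t2.eventually_const_lt (show r < A + K * 0 - 0 + ⟪x₀, a⟫ by linarith)
    obtain ⟨n, h1, h2⟩ := (e1.and e2).exists
    rw [← hU.coe_toReal (hxb _), EReal.coe_lt_coe_iff] at h1
    have h3 := hx (φ n)
    have h4 : 0 ≤ l (φ n) * ⟪x (φ n), b⟫ :=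
      mul_nonneg (hlp _).2.le (inner_nonneg_of_mem (hmem _) fun i => (hb i).le)
    simp only [Function.comp] at h2
    linarith
  have hx0 : U x₀ ≠ ⊥ := fun h => EReal.coe_ne_bot _ (le_bot_iff.1 (h ▸ key))
  refine ⟨x₀, hx0, fun z hz => ?_⟩
  rw [← hU.coe_toReal hx0, EReal.coe_le_coe_iff] at key
  have := hfen z hz
  rw [inner_sub_left]
  linarith

/-! ### Supergradients and essential smoothness -/

/-- A supergradient at a point of `dom U` forces that point to be interior: otherwise
`x₀ + t 𝟏` tends to a boundary point as `t ↓ 0`, while the gradients there are coordinatewise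
nonnegative and, by concavity along the ray, satisfy `⟨∇U(x₀ + t 𝟏), 𝟏⟩ ≤ ⟨a, 𝟏⟩`; they
stay bounded, against essential smoothness. -/
theorem mem_interior_of_superdiff
    {U : Euc d → EReal} (hU : SupportedOnOrthant U) {g : Euc d → Euc d} (hes : EssSmoothWith U g)
    {a x₀ : Euc d} (hx0 : U x₀ ≠ ⊥)
    (hsup : ∀ z, U z ≠ ⊥ → (U z).toReal ≤ (U x₀).toReal + ⟪z - x₀, a⟫) :
    x₀ ∈ interior (effDom U) := by
  by_contra hni
  have hint : ∀ t : ℝ, 0 < t → x₀ + t • onesVec d ∈ interior (effDom U) := by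
    intro t ht
    exact hU.mem_interior_effDom hx0 fun i => by simpa [onesVec] using ht
  have hbound : ∀ t : ℝ, 0 < t → ‖g (x₀ + t • onesVec d)‖ ≤ ⟪onesVec d, a⟫ := by
    intro t ht
    set y := x₀ + t • onesVec d with hy
    have hyi : y ∈ interior (effDom U) := hint t ht
    have hyb : U y ≠ ⊥ := interior_subset hyi
    have hg := hes.2.1 y hyi
    have hpos : g y ∈ posOrthant d := by
      intro i
      have h1 : ⟪g y, -EuclideanSpace.single i (1 : ℝ)⟫ ≤ 0 := by
        refine inner_gradient_le hg ?_
        have hc : ContinuousAt (fun s : ℝ => y + s • -EuclideanSpace.single i (1 : ℝ)) 0 := by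
          fun_prop
        have h2 : ∀ᶠ s in 𝓝 (0 : ℝ),
            y + s • -EuclideanSpace.single i (1 : ℝ) ∈ effDom U := by
          apply hc.eventually_mem
          simpa using mem_interior_iff_mem_nhds.1 hyi
        filter_upwards [h2.filter_mono nhdsWithin_le_nhds, self_mem_nhdsWithin] with s hs hs0
        have hs0' : (0 : ℝ) < s := hs0
        rw [mul_zero, add_zero]
        refine EReal.toReal_le_toReal (hU.2.2 _ _ fun j => ?_) hs (hU.1.2.1 y)
        by_cases hij : j = i <;> simp [hij, hs0'.le]
      rw [inner_eq_sum] at h1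
      simp at h1
      exact h1
    have hsum : ⟪g y, onesVec d⟫ ≤ ⟪onesVec d, a⟫ := by
      refine inner_gradient_le hg ?_
      filter_upwards [self_mem_nhdsWithin] with s hs0
      have hs : (0 : ℝ) < s := hs0
      have hzb : U (y + s • onesVec d) ≠ ⊥ := by
        have := hint (t + s) (by positivity)
        rw [add_smul, ← add_assoc] at this
        exact interior_subset this
      have h1 := hsup _ hzb
      have hts : 0 < t + s := by positivity
      -- `y` divides the segment from `x₀` to `y + s 𝟏` in the ratio `t : s`.
      have h2 := hU.1.1 (show (x₀, (U x₀).toReal) ∈ hypograph U from (hU.coe_toReal hx0).le)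
        (show (y + s • onesVec d, (U (y + s • onesVec d)).toReal) ∈ hypograph U from
          (hU.coe_toReal hzb).le)
        (show 0 ≤ s / (t + s) by positivity) (show 0 ≤ t / (t + s) by positivity)
        (by field_simp; ring)
      have h3 : (s / (t + s)) • x₀ + (t / (t + s)) • (y + s • onesVec d) = y := by
        ext i
        simp only [hy, onesVec, PiLp.add_apply, PiLp.smul_apply, smul_eq_mul]
        field_simp
        ring
      simp only [hypograph, Prod.smul_mk, Prod.mk_add_mk, mem_ofPred_eq, h3, smul_eq_mul] at h2
      rw [← hU.coe_toReal hyb, EReal.coe_le_coe_iff] at h2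
      have h4 : y + s • onesVec d - x₀ = (t + s) • onesVec d := by rw [hy]; module
      rw [h4, inner_smul_left] at h1
      simp only [conj_trivial] at h1
      have h6 : s / (t + s) * ((t + s) * ⟪onesVec d, a⟫) = s * ⟪onesVec d, a⟫ := by field_simp
      have h7 := mul_le_mul_of_nonneg_left h1 (show 0 ≤ s / (t + s) by positivity)
      have h8 : t / (t + s) = 1 - s / (t + s) := by field_simp; ring
      rw [h8] at h2
      rw [mul_add, h6] at h7
      linarith
    refine (norm_le_sum_of_mem hpos).trans (le_of_eq_of_le ?_ hsum)
    simp [inner_eq_sum, onesVec]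
  have hlim : Tendsto (fun n : ℕ => x₀ + (1 / ((n : ℝ) + 1)) • onesVec d) atTop (𝓝 x₀) := by
    have := (tendsto_one_div_add_atTop_nhds_zero_nat (𝕜 := ℝ)).smul_const (onesVec d)
    simpa using this.const_add x₀
  have hpos : ∀ n : ℕ, (0 : ℝ) < 1 / ((n : ℝ) + 1) := fun n => by positivity
  have hfr : x₀ ∈ frontier (interior (effDom U)) := by
    rw [isOpen_interior.frontier_eq]
    exact ⟨mem_closure_of_tendsto hlim (Eventually.of_forall fun n => hint _ (hpos n)), hni⟩
  have htop := hes.2.2 _ x₀ (fun n => hint _ (hpos n)) hfr hlim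
  obtain ⟨n, hn⟩ := (htop.eventually_gt_atTop ⟪onesVec d, a⟫).exists
  exact absurd (hbound _ (hpos n)) (not_le.2 hn)

/-! ### The boundary derivative -/

/-- For a utility function `U` supported on `ℝ^d_+` which is upper semi-continuous,
strictly concave on `int(ℝ^d_+)`, essentially smooth and asymptotically satiable, the
one-sided directional derivative of the dual function `U*` at any boundary point `a` of
`ℝ^d_+` with `U*(a) < ∞`, in any direction `b ∈ int(ℝ^d_+)`, is `-∞`:
`lim_{λ ↓ 0} (U*(a + λb) - U*(a))/λ = -∞`. -/
theorem dualFn_directional_deriv_boundary_bot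
    (U : Euc d → EReal) (hU : SupportedOnOrthant U)
    (husc : UpperSemicontinuous U)
    (hsc : StrictConcaveOnIntOrthant U)
    (g : Euc d → Euc d) (hes : EssSmoothWith U g)
    (hAS : AsympSatiable U) :
    ∀ a ∈ frontier (posOrthant d), dualFn U a ≠ ⊤ →
      ∀ b ∈ interior (posOrthant d),
        Tendsto (fun l : ℝ => (dualFn U (a + l • b) - dualFn U a) * ((l⁻¹ : ℝ) : EReal))
          (𝓝[>] (0 : ℝ)) (𝓝 (⊥ : EReal)) := by
  intro a ha hfin b hb
  by_contra hnt
  obtain ⟨x₀, hx0, hsup⟩ := exists_superdiff_of_not_tendsto hU husc hfin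
    (mem_interior_posOrthant.1 hb) hnt
  have hx0i : x₀ ∈ interior (posOrthant d) :=
    interior_mono (fun z hz => hU.mem_of_ne_bot hz) (mem_interior_of_superdiff hU hes hx0 hsup)
  rw [isClosed_posOrthant.frontier_eq, Set.mem_sdiff, mem_interior_posOrthant] at ha
  obtain ⟨ha0, hai⟩ := ha
  push Not at hai
  obtain ⟨i, hi⟩ := hai
  have hai : a i = 0 := le_antisymm hi (ha0 i)
  -- `U` is constant on the ray from `x₀` in direction `eᵢ`.
  have hray : ∀ s : ℝ, 0 ≤ s →
      U (x₀ + s • EuclideanSpace.single i (1 : ℝ)) = U x₀ := by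
    intro s hs
    have hle : U x₀ ≤ U (x₀ + s • EuclideanSpace.single i (1 : ℝ)) := by
      refine hU.2.2 _ _ fun j => ?_
      by_cases hij : j = i <;> simp [hij, hs]
    have hz : U (x₀ + s • EuclideanSpace.single i (1 : ℝ)) ≠ ⊥ :=
      fun h => hx0 (le_bot_iff.1 (h ▸ hle))
    refine le_antisymm ?_ hle
    have h1 := hsup _ hz
    rw [add_sub_cancel_left, inner_smul_left, inner_eq_sum] at h1
    simp [hai] at h1
    rw [← hU.coe_toReal hz, ← hU.coe_toReal hx0]
    exact_mod_cast h1
  have hy : x₀ + (1 : ℝ) • EuclideanSpace.single i (1 : ℝ) ∈ interior (posOrthant d) := by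
    rw [mem_interior_posOrthant] at hx0i ⊢
    intro j
    have := hx0i j
    by_cases hij : j = i
    · subst hij; simp; linarith
    · simpa [hij] using this
  have hne : x₀ ≠ x₀ + (1 : ℝ) • EuclideanSpace.single i (1 : ℝ) := by
    simp
  have h := hsc x₀ hx0i _ hy hne (1 / 2) (1 / 2) (by norm_num) (by norm_num) (by norm_num)
  have hmid : (1 / 2 : ℝ) • x₀ + (1 / 2 : ℝ) • (x₀ + (1 : ℝ) • EuclideanSpace.single i (1 : ℝ))
      = x₀ + (1 / 2 : ℝ) • EuclideanSpace.single i (1 : ℝ) := by module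
  rw [hmid, hray 1 zero_le_one, hray (1 / 2) (by norm_num), ← hU.coe_toReal hx0] at h
  norm_cast at h
  linarith
end
end
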